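/- Let V : ℝ → ℝ be Borel measurable, locally integrable and nonnegative almost everywhere, and let k ≥ 1. Then there exists a k-partition P of ℝ with Δ(P) = Δ*_k(ℝ) if and only if there exists some k-partition Q of ℝ with Δ(Q) ≤ Σ_V. (This is the paper's Corollary 1.4 for the metric graph G = ℝ.) -/

import Mathlib

open MeasureTheory Set Filter Topology
open scoped ENNReal

/-- Rayleigh quotient of a test function `f` for the Schrödinger form with potential `V`. -/
noncomputable def rayleigh (V : ℝ → ℝ) (f : ℝ → ℝ) : ℝ :=
  (∫ x, ((deriv f x) ^ 2 + V x * (f x) ^ 2)) / (∫ x, (f x) ^ 2)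

/-- `f` is an admissible test function for the closed set `S`: continuously differentiable,
not identically zero, with compact support contained in `S`. -/
def TestFor (S : Set ℝ) (f : ℝ → ℝ) : Prop :=
  ContDiff ℝ 1 f ∧ f ≠ 0 ∧ HasCompactSupport f ∧ tsupport f ⊆ S

/-- Dirichlet ground state energy `λ_V(S)`, with `sInf ∅ = ∞`. -/
noncomputable def lambdaV (V : ℝ → ℝ) (S : Set ℝ) : ℝ≥0∞ :=
  sInf {e : ℝ≥0∞ | ∃ f : ℝ → ℝ, TestFor S f ∧ e = ENNReal.ofReal (rayleigh V f)}

/-- `Σ_V`, the infimum of the essential spectrum of `-d²/dx² + V` on `ℝ`, characterized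
Persson-style as `sup_{R>0} λ_V({|x| ≥ R})`. -/
noncomputable def SigmaV (V : ℝ → ℝ) : ℝ≥0∞ :=
  ⨆ R : ℝ, ⨆ _ : 0 < R, lambdaV V {x : ℝ | R ≤ |x|}

/-- A `k`-partition of `ℝ`: `k` closed connected subsets with nonempty interior whose
pairwise intersections are contained in both frontiers. -/
def IsPartitionR (k : ℕ) (G : Fin k → Set ℝ) : Prop :=
  (∀ i, IsClosed (G i)) ∧ (∀ i, IsConnected (G i)) ∧
    (∀ i, (interior (G i)).Nonempty) ∧
    ∀ i j, i ≠ j → G i ∩ G j ⊆ frontier (G i) ∩ frontier (G j)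

/-- The energy `Δ(P)` of a partition: the maximum of the ground state energies. -/
noncomputable def energyR (V : ℝ → ℝ) {k : ℕ} (G : Fin k → Set ℝ) : ℝ≥0∞ :=
  ⨆ i, lambdaV V (G i)

/-- The infimal `k`-partition energy `Δ*_k(ℝ)`. -/
noncomputable def optEnergyR (V : ℝ → ℝ) (k : ℕ) : ℝ≥0∞ :=
  ⨅ G : {G : Fin k → Set ℝ // IsPartitionR k G}, energyR V G.1

lemma lambdaV_le {V : ℝ → ℝ} {S : Set ℝ} {f : ℝ → ℝ} (h : TestFor S f) :
    lambdaV V S ≤ ENNReal.ofReal (rayleigh V f) := sInf_le ⟨f, h, rfl⟩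

lemma exists_test_of_lt {V : ℝ → ℝ} {S : Set ℝ} {y : ℝ≥0∞} (h : lambdaV V S < y) :
    ∃ f, TestFor S f ∧ ENNReal.ofReal (rayleigh V f) < y := by
  obtain ⟨e, ⟨f, hf, rfl⟩, he⟩ := sInf_lt_iff.1 h
  exact ⟨f, hf, he⟩

lemma lambdaV_mono {V : ℝ → ℝ} {S T : Set ℝ} (h : S ⊆ T) : lambdaV V T ≤ lambdaV V S := by
  apply sInf_le_sInf
  rintro e ⟨f, ⟨h1, h2, h3, h4⟩, rfl⟩
  exact ⟨f, ⟨h1, h2, h3, h4.trans h⟩, rfl⟩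

lemma interior_nonempty_of_lt {V : ℝ → ℝ} {S : Set ℝ} (h : lambdaV V S < ⊤) :
    (interior S).Nonempty := by
  obtain ⟨f, ⟨h1, h2, h3, h4⟩, -⟩ := exists_test_of_lt h
  obtain ⟨x, hx⟩ := Function.ne_iff.1 h2
  refine ⟨x, mem_interior.2 ⟨Function.support f, (subset_tsupport f).trans h4, ?_, hx⟩⟩
  exact h1.continuous.isOpen_support

lemma cs_sq {f : ℝ → ℝ} (hc : HasCompactSupport f) : HasCompactSupport (fun x => f x ^ 2) := by
  apply hc.mono
  intro x hx h
  simp [h] at hx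

lemma int_sq {f : ℝ → ℝ} (hf : Continuous f) (hc : HasCompactSupport f) :
    Integrable (fun x => f x ^ 2) := by
  have h : Continuous (fun x => f x ^ 2) := by fun_prop
  exact h.integrable_of_hasCompactSupport (cs_sq hc)

lemma int_V {V f : ℝ → ℝ} (hloc : LocallyIntegrable V) (hf : Continuous f)
    (hc : HasCompactSupport f) : Integrable (fun x => V x * f x ^ 2) := by
  have h : Continuous (fun x => f x ^ 2) := by fun_prop
  have h2 := hloc.integrable_smul_right_of_hasCompactSupport h (cs_sq hc)
  simpa only [smul_eq_mul] using h2

lemma pos_sq {f : ℝ → ℝ} (hf : Continuous f) (hc : HasCompactSupport f) (h0 : f ≠ 0) :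
    0 < ∫ x, f x ^ 2 := by
  obtain ⟨x, hx⟩ := Function.ne_iff.1 h0
  have h : Continuous (fun x => f x ^ 2) := by fun_prop
  have hx' : f x ≠ 0 := hx
  exact h.integral_pos_of_hasCompactSupport_nonneg_nonzero (x := x) 
    (cs_sq hc) (fun x => sq_nonneg _) (pow_ne_zero 2 hx')

lemma young {a b e : ℝ} (he : 0 < e) : (a + b) ^ 2 ≤ (1 + e) * a ^ 2 + (1 + 1 / e) * b ^ 2 := by
  have : (1 + e) * a ^ 2 + (1 + 1 / e) * b ^ 2 - (a + b) ^ 2 = (e * a - b) ^ 2 / e := by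
    field_simp; ring
  have h2 : 0 ≤ (e * a - b) ^ 2 / e := by positivity
  linarith

/-- slope of the smooth clamp -/
noncomputable def slp (t : ℝ) : ℝ := max 0 (min 1 (2 - |t|))
noncomputable def clp (t : ℝ) : ℝ := ∫ x in (0 : ℝ)..t, slp x

lemma slp_cont : Continuous slp := by unfold slp; fun_prop
lemma slp_nonneg (t : ℝ) : 0 ≤ slp t := le_max_left _ _
lemma slp_le (t : ℝ) : slp t ≤ 1 := by unfold slp; simp
lemma slp_one {t : ℝ} (h : |t| ≤ 1) : slp t = 1 := by
  unfold slp; rw [min_eq_left (by linarith)]; simp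
lemma slp_zero {t : ℝ} (h : 2 ≤ |t|) : slp t = 0 := by
  unfold slp; rw [max_eq_left]; exact (min_le_right _ _).trans (by linarith)
lemma clp_deriv (t : ℝ) : HasDerivAt clp (slp t) t :=
  intervalIntegral.integral_hasDerivAt_right (slp_cont.intervalIntegrable _ _)
    (slp_cont.stronglyMeasurableAtFilter _ _) slp_cont.continuousAt
lemma clp_contDiff : ContDiff ℝ 1 clp := by
  rw [contDiff_one_iff_deriv]
  refine ⟨fun t => (clp_deriv t).differentiableAt, ?_⟩
  rw [show deriv clp = slp from funext fun t => (clp_deriv t).deriv]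
  exact slp_cont
lemma slp_neg (t : ℝ) : slp (-t) = slp t := by simp [slp]
lemma clp_neg (t : ℝ) : clp (-t) = - clp t := by
  unfold clp
  have := intervalIntegral.integral_comp_neg (f := slp) (a := 0) (b := t)
  simp only [slp_neg, neg_zero] at this
  rw [this, intervalIntegral.integral_symm]
lemma clp_nonneg {t : ℝ} (ht : 0 ≤ t) : 0 ≤ clp t :=
  intervalIntegral.integral_nonneg ht (fun x _ => slp_nonneg x)
lemma clp_le {t : ℝ} (ht : 0 ≤ t) : clp t ≤ t := by
  have := intervalIntegral.integral_mono_on (f := slp) (g := fun _ => (1:ℝ)) (μ := volume) ht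
    (slp_cont.intervalIntegrable _ _) (by simp) (fun x _ => slp_le x)
  simpa [clp] using this
lemma clp_le_two {t : ℝ} (ht : 0 ≤ t) : clp t ≤ 2 := by
  rcases le_total t 2 with h | h
  · exact (clp_le ht).trans h
  · have h1 : clp t = clp 2 + ∫ x in (2:ℝ)..t, slp x :=
      (intervalIntegral.integral_add_adjacent_intervals (slp_cont.intervalIntegrable _ _)
        (slp_cont.intervalIntegrable _ _)).symm
    have h2 : ∫ x in (2:ℝ)..t, slp x = ∫ x in (2:ℝ)..t, (0:ℝ) := by
      apply intervalIntegral.integral_congr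
      intro x hx
      rw [uIcc_of_le h] at hx
      exact slp_zero (by rw [abs_of_nonneg] <;> linarith [hx.1])
    rw [h1, h2]; simp
    exact clp_le (by norm_num)
lemma clp_eq_nonneg {t : ℝ} (ht : 0 ≤ t) (h : t ≤ 1) : clp t = t := by
  have : clp t = ∫ x in (0:ℝ)..t, (1:ℝ) := by
    apply intervalIntegral.integral_congr
    intro x hx
    rw [uIcc_of_le ht] at hx
    exact slp_one (by rw [abs_of_nonneg hx.1]; linarith [hx.2])
  rw [this]; simp
lemma clp_abs_le (t : ℝ) : |clp t| ≤ 2 := by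
  rcases le_total 0 t with h | h
  · rw [abs_of_nonneg (clp_nonneg h)]; exact clp_le_two h
  · have := clp_neg (-t); rw [neg_neg] at this
    rw [this, abs_neg, abs_of_nonneg (clp_nonneg (by linarith))]; exact clp_le_two (by linarith)
lemma clp_eq {t : ℝ} (h : |t| ≤ 1) : clp t = t := by
  rcases le_total 0 t with h' | h'
  · exact clp_eq_nonneg h' (by rwa [abs_of_nonneg h'] at h)
  · have := clp_neg (-t); rw [neg_neg] at this
    rw [abs_of_nonpos h'] at h
    rw [this, clp_eq_nonneg (by linarith) h, neg_neg]
/-- subtracting a fraction of the clamp does not increase the square -/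
lemma clp_sub_sq (t : ℝ) {s : ℝ} (h0 : 0 ≤ s) (h1 : s ≤ 1) : (t - s * clp t) ^ 2 ≤ t ^ 2 := by
  have key : ∀ t : ℝ, 0 ≤ t → (t - s * clp t) ^ 2 ≤ t ^ 2 := by
    intro t ht
    have a := clp_nonneg ht
    have b := clp_le ht
    have c : s * clp t ≤ t := by nlinarith
    have d : 0 ≤ s * clp t := by positivity
    nlinarith
  rcases le_total 0 t with h | h
  · exact key t h
  · have := key (-t) (by linarith)
    rw [clp_neg] at this
    nlinarith

lemma small_of_zero {f : ℝ → ℝ} (hf : ContDiff ℝ 1 f) (hc : HasCompactSupport f) {u x d c : ℝ}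
    (hd : 0 < d) (hcpos : 0 < c) (hu : f u = 0) (hx : |x - u| ≤ d)
    (hD : d * ∫ x, deriv f x ^ 2 ≤ c ^ 2) : |f x| ≤ c := by
  have hfd : Continuous (deriv f) := hf.continuous_deriv le_rfl
  have hIntg := int_sq hfd hc.deriv
  have h1 : ∫ t in u..x, deriv f t = f x := by
    rw [intervalIntegral.integral_deriv_eq_sub (fun t _ => hf.differentiable (by norm_num) t)
      (hfd.intervalIntegrable _ _), hu, sub_zero]
  rw [← h1]
  have h2 : |∫ t in u..x, deriv f t| ≤ ∫ t in Set.uIoc u x, |deriv f t| := by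
    simpa using intervalIntegral.norm_integral_le_integral_norm_uIoc (f := deriv f) (a := u) (b := x) (μ := volume)
  refine h2.trans ?_
  have hK : IntegrableOn (fun _ : ℝ => (c / d) / 2) (uIoc u x) :=
    (continuous_const.intervalIntegrable u x).def'
  have hI : IntegrableOn (fun t => (c / d) / 2 + deriv f t ^ 2 * (d / c / 2)) (uIoc u x) :=
    hK.add (hIntg.mul_const _).integrableOn
  have h3 : ∫ t in Set.uIoc u x, |deriv f t| ≤ ∫ t in Set.uIoc u x, ((c / d) / 2 + deriv f t ^ 2 * (d / c / 2)) := by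
    apply integral_mono_ae ?_ hI ?_
    · exact (hfd.abs.intervalIntegrable u x).def'
    · refine Eventually.of_forall fun t => ?_
      have h := sq_nonneg (|deriv f t| - c / d)
      have e : (c / d) / 2 + deriv f t ^ 2 * (d / c / 2) - |deriv f t| =
         (|deriv f t| - c / d) ^ 2 * (d / c / 2) := by
        rw [← sq_abs (deriv f t)]; field_simp; ring
      have : 0 ≤ (|deriv f t| - c / d) ^ 2 * (d / c / 2) := by positivity
      simp only; linarith
  refine h3.trans ?_
  rw [integral_add hK (hIntg.mul_const _).integrableOn, integral_mul_const]
  have h4 : ∫ t in Set.uIoc u x, deriv f t ^ 2 ≤ ∫ t, deriv f t ^ 2 :=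
    setIntegral_le_integral hIntg (Eventually.of_forall fun t => sq_nonneg _)
  have h5 : ∫ t in Set.uIoc u x, (c / d) / 2 = |x - u| * ((c / d) / 2) := by
    simp [measureReal_def, uIoc, Real.volume_Ioc, max_sub_min_eq_abs]
  rw [h5]
  have h6 : |x - u| * ((c / d) / 2) ≤ d * ((c / d) / 2) := by gcongr
  have h7 : (∫ t in Set.uIoc u x, deriv f t ^ 2) * (d / c / 2) ≤ c ^ 2 / d * (d / c / 2) := by
    have : (∫ t, deriv f t ^ 2) ≤ c ^ 2 / d := by rw [le_div_iff₀ hd]; linarith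
    gcongr; linarith
  have h8 : d * ((c / d) / 2) = c / 2 := by field_simp
  have h9 : c ^ 2 / d * (d / c / 2) = c / 2 := by field_simp
  linarith

/-- Rayleigh quotient bounds without division -/
lemma rayleigh_split {V f : ℝ → ℝ} (hloc : LocallyIntegrable V) (hf : ContDiff ℝ 1 f)
    (hc : HasCompactSupport f) :
    ∫ x, ((deriv f x) ^ 2 + V x * (f x) ^ 2) =
      (∫ x, (deriv f x) ^ 2) + ∫ x, V x * (f x) ^ 2 :=
  integral_add (int_sq (hf.continuous_deriv le_rfl) hc.deriv) (int_V hloc hf.continuous hc)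

lemma VInt_nonneg {V : ℝ → ℝ} (hpos : ∀ᵐ x ∂(volume : Measure ℝ), 0 ≤ V x) (f : ℝ → ℝ) :
    0 ≤ ∫ x, V x * (f x) ^ 2 := by
  apply integral_nonneg_of_ae
  filter_upwards [hpos] with x hx
  exact mul_nonneg hx (sq_nonneg _)

lemma cutoff (p : ℝ) : ∃ C : ℝ, 0 ≤ C ∧ ∀ (V : ℝ → ℝ), LocallyIntegrable V →
    (∀ᵐ x ∂(volume : Measure ℝ), 0 ≤ V x) → ∀ f : ℝ → ℝ, ContDiff ℝ 1 f → HasCompactSupport f →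
    ∀ c e : ℝ, 0 < c → 0 < e → ∃ g : ℝ → ℝ, ContDiff ℝ 1 g ∧ (∀ x, f x = 0 → g x = 0) ∧
      (∀ x, |x - p| ≤ 1 → |f x| ≤ c → g x = 0) ∧
      (∫ x, f x ^ 2) ≤ (1 + e) * (∫ x, g x ^ 2) + (1 + 1 / e) * (C * c ^ 2) ∧
      (∫ x, ((deriv g x) ^ 2 + V x * (g x) ^ 2)) ≤
        (1 + e) * (∫ x, ((deriv f x) ^ 2 + V x * (f x) ^ 2)) + (1 + 1 / e) * (C * c ^ 2) := by
  let ψ : ContDiffBump p := ⟨1, 2, by norm_num, by norm_num⟩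
  have hψ : ContDiff ℝ 1 ψ := ψ.contDiff
  have hψc : HasCompactSupport ψ := ψ.hasCompactSupport
  have hψ' : Continuous (deriv ψ) := hψ.continuous_deriv le_rfl
  have iψ := int_sq hψ.continuous hψc
  have iψ' := int_sq hψ' hψc.deriv
  have n1 : 0 ≤ ∫ x, ψ x ^ 2 := integral_nonneg fun x => sq_nonneg _
  have n2 : 0 ≤ ∫ x, deriv ψ x ^ 2 := integral_nonneg fun x => sq_nonneg _
  refine ⟨4 * ((∫ x, ψ x ^ 2) + ∫ x, deriv ψ x ^ 2), by positivity, ?_⟩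
  intro V hloc hpos f hf hfc c e hc he
  have hder : ∀ x, HasDerivAt (fun x => f x - ψ x * (c * clp (f x / c)))
      (deriv f x * (1 - ψ x * slp (f x / c)) - deriv ψ x * (c * clp (f x / c))) x := by
    intro x
    have d1 : HasDerivAt f (deriv f x) x := (hf.differentiable (by norm_num) x).hasDerivAt
    have d2 : HasDerivAt ψ (deriv ψ x) x := (hψ.differentiable (by norm_num) x).hasDerivAt
    have d3 := ((clp_deriv (f x / c)).comp x (d1.div_const c)).const_mul c
    have d4 := d1.sub (d2.mul d3)
    refine d4.congr_deriv (Eq.symm ?_)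
    show deriv f x * (1 - ψ x * slp (f x / c)) - deriv ψ x * (c * clp (f x / c)) =
      deriv f x - (deriv ψ x * (c * clp (f x / c)) + ψ x * (c * (slp (f x / c) * (deriv f x / c))))
    have : c * (slp (f x / c) * (deriv f x / c)) = slp (f x / c) * deriv f x := by
      have hc' : c ≠ 0 := hc.ne'
      rw [mul_left_comm, mul_div_cancel₀ _ hc']
    rw [this]
    ring
  set g : ℝ → ℝ := fun x => f x - ψ x * (c * clp (f x / c)) with hg
  have hgC : ContDiff ℝ 1 g :=
    hf.sub (hψ.mul (contDiff_const.mul (clp_contDiff.comp (hf.div_const c))))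
  have hz : ∀ x, f x = 0 → g x = 0 := by
    intro x hx
    have : clp 0 = 0 := clp_eq (by simp)
    simp [hg, hx, this]
  have hgc : HasCompactSupport g := hfc.mono (fun x hx h => hx (hz x h))
  have ig := int_sq hgC.continuous hgc
  have ig' := int_sq (hgC.continuous_deriv le_rfl) hgc.deriv
  have iF := int_sq hf.continuous hfc
  have iF' := int_sq (hf.continuous_deriv le_rfl) hfc.deriv
  have hb : ∀ x, (c * clp (f x / c)) ^ 2 ≤ 4 * c ^ 2 := by
    intro x
    have := sq_le_sq' (abs_le.1 (clp_abs_le (f x / c))).1 (abs_le.1 (clp_abs_le (f x / c))).2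
    have h2 : 0 ≤ c ^ 2 := sq_nonneg c
    nlinarith
  refine ⟨g, hgC, hz, ?_, ?_, ?_⟩
  · intro x hx hfx
    have h1 : ψ x = 1 := ψ.one_of_mem_closedBall (by simpa [Real.dist_eq] using hx)
    have h2 : clp (f x / c) = f x / c := by
      apply clp_eq; rw [abs_div, abs_of_pos hc]; exact (div_le_one hc).2 hfx
    simp only [hg, h1, h2]; field_simp; ring
  · have hp : ∀ x, f x ^ 2 ≤ (1 + e) * g x ^ 2 + (1 + 1 / e) * (4 * c ^ 2) * ψ x ^ 2 := by
      intro x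
      have h1 := young (a := g x) (b := ψ x * (c * clp (f x / c))) he
      have h2 : g x + ψ x * (c * clp (f x / c)) = f x := by simp [hg]
      rw [h2, mul_pow] at h1
      have h3 : ψ x ^ 2 * (c * clp (f x / c)) ^ 2 ≤ ψ x ^ 2 * (4 * c ^ 2) := by
        gcongr; exact hb x
      have h4 : (1 + 1 / e) * (ψ x ^ 2 * (c * clp (f x / c)) ^ 2) ≤
        (1 + 1 / e) * (ψ x ^ 2 * (4 * c ^ 2)) := by gcongr
      linarith
    have := integral_mono iF ((ig.const_mul _).add (iψ.const_mul _)) hp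
    simp only [Pi.add_apply] at this
    rw [integral_add (ig.const_mul _) (iψ.const_mul _), integral_const_mul,
      integral_const_mul] at this
    refine this.trans ?_
    have h5 : 0 ≤ (1 + 1 / e) * (4 * c ^ 2) * ∫ x, deriv ψ x ^ 2 := by positivity
    linarith
  · rw [rayleigh_split hloc hgC hgc, rayleigh_split hloc hf hfc]
    have hp : ∀ x, deriv g x ^ 2 ≤
        (1 + e) * deriv f x ^ 2 + (1 + 1 / e) * (4 * c ^ 2) * deriv ψ x ^ 2 := by
      intro x
      rw [(hder x).deriv]
      have h1 := young (a := deriv f x * (1 - ψ x * slp (f x / c)))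
        (b := -(deriv ψ x * (c * clp (f x / c)))) he
      rw [← sub_eq_add_neg, neg_sq, mul_pow, mul_pow] at h1
      have h3 : deriv ψ x ^ 2 * (c * clp (f x / c)) ^ 2 ≤ deriv ψ x ^ 2 * (4 * c ^ 2) := by
        gcongr; exact hb x
      have h4 : (1 + 1 / e) * (deriv ψ x ^ 2 * (c * clp (f x / c)) ^ 2) ≤
        (1 + 1 / e) * (deriv ψ x ^ 2 * (4 * c ^ 2)) := by gcongr
      have q0 : 0 ≤ ψ x := ψ.nonneg
      have q1 : ψ x ≤ 1 := ψ.le_one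
      have q2 := slp_nonneg (f x / c)
      have q3 := slp_le (f x / c)
      have q4 : ψ x * slp (f x / c) ≤ 1 := by nlinarith
      have q5 : 0 ≤ ψ x * slp (f x / c) := by positivity
      have q6 : (1 - ψ x * slp (f x / c)) ^ 2 ≤ 1 := by nlinarith
      have q7 : deriv f x ^ 2 * (1 - ψ x * slp (f x / c)) ^ 2 ≤ deriv f x ^ 2 * 1 := by gcongr
      have q8 : (1 + e) * (deriv f x ^ 2 * (1 - ψ x * slp (f x / c)) ^ 2) ≤
        (1 + e) * (deriv f x ^ 2 * 1) := by gcongr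
      linarith
    have := integral_mono ig' ((iF'.const_mul _).add (iψ'.const_mul _)) hp
    simp only [Pi.add_apply] at this
    rw [integral_add (iF'.const_mul _) (iψ'.const_mul _), integral_const_mul,
      integral_const_mul] at this
    have hV : ∫ x, V x * g x ^ 2 ≤ ∫ x, V x * f x ^ 2 := by
      apply integral_mono_ae (int_V hloc hgC.continuous hgc) (int_V hloc hf.continuous hfc)
      filter_upwards [hpos] with x hx
      apply mul_le_mul_of_nonneg_left _ hx
      have h1 := clp_sub_sq (f x / c) (s := ψ x) ψ.nonneg ψ.le_one
      have h2 : g x = c * (f x / c - ψ x * clp (f x / c)) := by simp only [hg]; field_simp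
      have h3 : f x ^ 2 = c ^ 2 * (f x / c) ^ 2 := by field_simp
      rw [h2, h3, mul_pow]
      gcongr
    have h0 := VInt_nonneg hpos f
    have h5 : 0 ≤ (1 + 1 / e) * (4 * c ^ 2) * ∫ x, ψ x ^ 2 := by positivity
    have h6 : 0 ≤ e * ∫ x, V x * f x ^ 2 := by positivity
    linarith

lemma tsupport_subset_of_zero {f g : ℝ → ℝ} (h : ∀ x, f x = 0 → g x = 0) :
    tsupport g ⊆ tsupport f :=
  closure_mono (fun x hx h' => hx (h x h'))

lemma cut_lemma {V : ℝ → ℝ} (hloc : LocallyIntegrable V)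
    (hpos : ∀ᵐ x ∂(volume : Measure ℝ), 0 ≤ V x) (p : ℝ) {S B : Set ℝ} (hB : IsClosed B)
    {y : ℝ≥0∞} (hy : y < lambdaV V (S ∩ B)) :
    ∃ d : ℝ, 0 < d ∧ ∀ S' : Set ℝ, S' ⊆ S →
      (∀ f, TestFor S' f → ∀ x, x ∉ B → f x = 0 ∨ (|x - p| ≤ 1 ∧ ∃ u, |x - u| ≤ d ∧ f u = 0)) →
      y < lambdaV V S' := by
  obtain ⟨C, hC, hcut⟩ := cutoff p
  obtain ⟨y1, hy1, hy1'⟩ := ENNReal.lt_iff_exists_nnreal_btwn.1 hy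
  obtain ⟨y2, hy2, hy2'⟩ := ENNReal.lt_iff_exists_nnreal_btwn.1 hy1'
  have h12 : (y1 : ℝ) < y2 := by exact_mod_cast hy2
  have hy1p : (0:ℝ) < y1 := by
    have : (0 : ℝ≥0∞) < y1 := bot_le.trans_lt hy1
    exact_mod_cast this
  have hev : ∀ᶠ e in 𝓝[>] (0:ℝ), (1 + e) * (y1 * ((1 + e) + C * (e ^ 2 + e))) <
      y2 * (1 - C * (e ^ 2 + e) * y1) := by
    apply Filter.Eventually.filter_mono nhdsWithin_le_nhds
    apply ContinuousAt.eventually_lt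
    · fun_prop
    · fun_prop
    · simpa using h12
  obtain ⟨e, hE, he⟩ := (hev.and self_mem_nhdsWithin).exists
  replace he : 0 < e := he
  refine ⟨e ^ 2, by positivity, ?_⟩
  intro S' hS' hz
  by_contra hcon
  push Not at hcon
  obtain ⟨f, hf, hfr⟩ := exists_test_of_lt (hcon.trans_lt hy1)
  obtain ⟨f1, f2, f3, f4⟩ := hf
  have hN := pos_sq f1.continuous f3 f2
  have hr : rayleigh V f < y1 := by
    by_contra h
    push Not at h
    have := ENNReal.ofReal_le_ofReal h
    rw [ENNReal.ofReal_coe_nnreal] at this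
    exact absurd hfr (not_lt.2 this)
  rw [rayleigh, div_lt_iff₀ hN] at hr
  have hD : ∫ x, deriv f x ^ 2 ≤ y1 * ∫ x, f x ^ 2 := by
    rw [rayleigh_split hloc f1 f3] at hr
    linarith [VInt_nonneg hpos f]
  set N := ∫ x, f x ^ 2 with hNdef
  have hc2 : 0 < e ^ 2 * (y1 * N) := by positivity
  have hcsq : Real.sqrt (e ^ 2 * (y1 * N)) ^ 2 = e ^ 2 * (y1 * N) := Real.sq_sqrt hc2.le
  have hcp : 0 < Real.sqrt (e ^ 2 * (y1 * N)) := Real.sqrt_pos.2 hc2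
  set c := Real.sqrt (e ^ 2 * (y1 * N)) with hcdef
  obtain ⟨g, g1, g2, g3, g4, g5⟩ := hcut V hloc hpos f f1 f3 c e hcp he
  have hgB : ∀ x, x ∉ B → g x = 0 := by
    intro x hx
    rcases hz f ⟨f1, f2, f3, f4⟩ x hx with h | ⟨h, u, hu, hfu⟩
    · exact g2 x h
    · apply g3 x h
      apply small_of_zero f1 f3 (by positivity : 0 < e ^ 2) hcp hfu hu
      rw [hcsq]; gcongr
  have hid : (1 + 1 / e) * (C * c ^ 2) = C * (e ^ 2 + e) * y1 * N := by
    rw [hcsq]; field_simp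
  rw [hid] at g4 g5
  set M := ∫ x, g x ^ 2
  set Eg := ∫ x, ((deriv g x) ^ 2 + V x * (g x) ^ 2)
  have hfin : (1 + e) * Eg < y2 * ((1 + e) * M) := by
    have a1 : (1 + e) * Eg ≤ (1 + e) * (y1 * ((1 + e) + C * (e ^ 2 + e))) * N := by
      have : Eg ≤ (1 + e) * (y1 * N) + C * (e ^ 2 + e) * y1 * N := by
        refine g5.trans ?_
        gcongr
      have := mul_le_mul_of_nonneg_left this (by positivity : 0 ≤ 1 + e)
      linarith
    have a2 := mul_lt_mul_of_pos_right hE hN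
    have a3 : (y2:ℝ) * (1 - C * (e ^ 2 + e) * y1) * N ≤ y2 * ((1 + e) * M) := by
      rw [mul_assoc]
      apply mul_le_mul_of_nonneg_left _ y2.2
      linarith
    linarith
  have hEM : Eg < y2 * M := by
    have : (1 + e) * Eg < (1 + e) * (y2 * M) := by linarith
    exact lt_of_mul_lt_mul_left this (by positivity)
  have hEg : 0 ≤ Eg := by
    apply integral_nonneg_of_ae
    filter_upwards [hpos] with x hx
    simp only [Pi.zero_apply]
    positivity
  have hM : 0 < M := by
    by_contra h
    push Not at h
    have : (y2:ℝ) * M ≤ 0 := mul_nonpos_of_nonneg_of_nonpos y2.2 h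
    linarith
  have hgt : TestFor (S ∩ B) g := by
    refine ⟨g1, ?_, f3.mono (fun x hx h => hx (g2 x h)), subset_inter ?_ ?_⟩
    · intro h
      simp [M, h] at hM
    · exact (tsupport_subset_of_zero g2).trans (f4.trans hS')
    · apply closure_minimal _ hB
      intro x hx
      by_contra h
      exact hx (hgB x h)
  have h1 := lambdaV_le (V := V) hgt
  have h2 : rayleigh V g ≤ y2 := by
    rw [rayleigh, div_le_iff₀ hM]; exact hEM.le
  have h3 := h1.trans (ENNReal.ofReal_le_ofReal h2)
  rw [ENNReal.ofReal_coe_nnreal] at h3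
  exact absurd hy2' (not_lt.2 h3)

lemma cut_left {V : ℝ → ℝ} (hloc : LocallyIntegrable V)
    (hpos : ∀ᵐ x ∂(volume : Measure ℝ), 0 ≤ V x) (p : ℝ) {S : Set ℝ}
    {y : ℝ≥0∞} (hy : y < lambdaV V (S ∩ Ici p)) :
    ∃ d : ℝ, 0 < d ∧ y < lambdaV V (S ∩ Ici (p - d)) := by
  obtain ⟨d, hd, h⟩ := cut_lemma hloc hpos p isClosed_Ici hy
  have hm : 0 < min (d / 2) 1 := by positivity
  refine ⟨min (d / 2) 1, hm, h _ inter_subset_left ?_⟩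
  rintro f ⟨f1, f2, f3, f4⟩ x hx
  have hm1 : min (d / 2) 1 ≤ d / 2 := min_le_left _ _
  have hm2 : min (d / 2) 1 ≤ 1 := min_le_right _ _
  have hzero : ∀ z, z < p - min (d / 2) 1 → f z = 0 := by
    intro z hz
    by_contra hne
    have := (f4 (subset_tsupport f hne)).2
    simp only [mem_Ici] at this
    linarith
  simp only [mem_Ici, not_le] at hx
  rcases lt_or_ge x (p - min (d / 2) 1) with h' | h'
  · exact Or.inl (hzero x h')
  · refine Or.inr ⟨abs_le.2 ⟨by linarith, by linarith⟩, p - d, abs_le.2 ⟨by linarith, by linarith⟩, hzero _ (by linarith)⟩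

lemma cut_right {V : ℝ → ℝ} (hloc : LocallyIntegrable V)
    (hpos : ∀ᵐ x ∂(volume : Measure ℝ), 0 ≤ V x) (p : ℝ) {S : Set ℝ}
    {y : ℝ≥0∞} (hy : y < lambdaV V (S ∩ Iic p)) :
    ∃ d : ℝ, 0 < d ∧ y < lambdaV V (S ∩ Iic (p + d)) := by
  obtain ⟨d, hd, h⟩ := cut_lemma hloc hpos p isClosed_Iic hy
  have hm : 0 < min (d / 2) 1 := by positivity
  refine ⟨min (d / 2) 1, hm, h _ inter_subset_left ?_⟩
  rintro f ⟨f1, f2, f3, f4⟩ x hx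
  have hm1 : min (d / 2) 1 ≤ d / 2 := min_le_left _ _
  have hm2 : min (d / 2) 1 ≤ 1 := min_le_right _ _
  have hzero : ∀ z, p + min (d / 2) 1 < z → f z = 0 := by
    intro z hz
    by_contra hne
    have := (f4 (subset_tsupport f hne)).2
    simp only [mem_Iic] at this
    linarith
  simp only [mem_Iic, not_le] at hx
  rcases lt_or_ge (p + min (d / 2) 1) x with h' | h'
  · exact Or.inl (hzero x h')
  · refine Or.inr ⟨abs_le.2 ⟨by linarith, by linarith⟩, p + d, abs_le.2 ⟨by linarith, by linarith⟩, hzero _ (by linarith)⟩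

/-- real interval with extended-real endpoints -/
def eInt (a b : EReal) : Set ℝ := {x : ℝ | a ≤ (x : EReal) ∧ (x : EReal) ≤ b}

lemma eInt_mono {a b a' b' : EReal} (h : a' ≤ a) (h' : b ≤ b') : eInt a b ⊆ eInt a' b' :=
  fun _ hx => ⟨h.trans hx.1, hx.2.trans h'⟩

lemma lsc_point {V : ℝ → ℝ} (hloc : LocallyIntegrable V)
    (hpos : ∀ᵐ x ∂(volume : Measure ℝ), 0 ≤ V x) {y : ℝ≥0∞} (hS : y < SigmaV V)
    (a b : EReal) (hy : y < lambdaV V (eInt a b)) :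
    ∀ᶠ q in 𝓝 (a, b), y < lambdaV V (eInt q.1 q.2) := by
  obtain ⟨R, hR⟩ := lt_iSup_iff.1 hS
  obtain ⟨hR0, hR⟩ := lt_iSup_iff.1 hR
  have t1 : Tendsto (fun q : EReal × EReal => q.1) (𝓝 (a, b)) (𝓝 a) := continuous_fst.tendsto _
  have t2 : Tendsto (fun q : EReal × EReal => q.2) (𝓝 (a, b)) (𝓝 b) := continuous_snd.tendsto _
  by_cases ha : a = ⊤
  · subst ha
    have := t1.eventually (lt_mem_nhds (EReal.coe_lt_top R))
    filter_upwards [this] with q hq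
    refine hR.trans_le (lambdaV_mono ?_)
    intro x hx
    have : R < x := by exact_mod_cast hq.trans_le hx.1
    exact this.le.trans (le_abs_self x)
  by_cases hb : b = ⊥
  · subst hb
    have := t2.eventually (gt_mem_nhds (EReal.bot_lt_coe (-R)))
    filter_upwards [this] with q hq
    refine hR.trans_le (lambdaV_mono ?_)
    intro x hx
    have : x < -R := by exact_mod_cast hx.2.trans_lt hq
    exact (by linarith : R ≤ -x).trans (neg_le_abs x)
  have hL : ∃ a0, (∀ᶠ a' in 𝓝 a, a0 ≤ a') ∧ y < lambdaV V (eInt a0 b) := by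
    induction a using EReal.rec with
    | bot => exact ⟨⊥, by simp, hy⟩
    | top => exact absurd rfl ha
    | coe a =>
      have h1 : eInt a b = {x : ℝ | (x : EReal) ≤ b} ∩ Ici a := by
        ext x; simp [eInt, and_comm]
      rw [h1] at hy
      obtain ⟨d, hd, h⟩ := cut_left hloc hpos a hy
      refine ⟨((a - d : ℝ) : EReal), ?_, ?_⟩
      · have : ((a - d : ℝ) : EReal) < a := by exact_mod_cast (by linarith : a - d < a)
        filter_upwards [lt_mem_nhds this] with q hq using hq.le
      · convert h using 2
        ext x; simp only [eInt, mem_ofPred_eq, mem_inter_iff, mem_Ici, EReal.coe_le_coe_iff]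
        tauto
  obtain ⟨a0, ha0, hy0⟩ := hL
  have hRt : ∃ b0, (∀ᶠ b' in 𝓝 b, b' ≤ b0) ∧ y < lambdaV V (eInt a0 b0) := by
    induction b using EReal.rec with
    | top => exact ⟨⊤, by simp, hy0⟩
    | bot => exact absurd rfl hb
    | coe b =>
      have h1 : eInt a0 b = {x : ℝ | a0 ≤ (x : EReal)} ∩ Iic b := by
        ext x; simp [eInt]
      rw [h1] at hy0
      obtain ⟨d, hd, h⟩ := cut_right hloc hpos b hy0
      refine ⟨((b + d : ℝ) : EReal), ?_, ?_⟩
      · have : (b : EReal) < ((b + d : ℝ) : EReal) := by exact_mod_cast (by linarith : b < b + d)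
        filter_upwards [gt_mem_nhds this] with q hq using hq.le
      · convert h using 2
        ext x; simp only [eInt, mem_ofPred_eq, mem_inter_iff, mem_Iic, EReal.coe_le_coe_iff]
  obtain ⟨b0, hb0, hy00⟩ := hRt
  filter_upwards [t1.eventually ha0, t2.eventually hb0] with q h1 h2
  exact hy00.trans_le (lambdaV_mono (eInt_mono h1 h2))

lemma lsc_F {V : ℝ → ℝ} (hloc : LocallyIntegrable V)
    (hpos : ∀ᵐ x ∂(volume : Measure ℝ), 0 ≤ V x) :
    LowerSemicontinuous (fun q : EReal × EReal => min (lambdaV V (eInt q.1 q.2)) (SigmaV V)) := by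
  intro q y hy
  replace hy := lt_min_iff.1 hy
  filter_upwards [lsc_point hloc hpos hy.2 q.1 q.2 hy.1] with q' hq'
  exact lt_min hq' hy.2

/-- admissible endpoints -/
def adm (k : ℕ) : Set (Fin k → EReal × EReal) :=
  {q | ∀ i j, i ≠ j → (q i).2 ≤ (q j).1 ∨ (q j).2 ≤ (q i).1}

lemma adm_closed (k : ℕ) : IsClosed (adm k) := by
  simp only [adm, ofPred_forall]
  refine isClosed_iInter fun i => isClosed_iInter fun j => isClosed_iInter fun _ => ?_
  exact (isClosed_le (f := fun q : Fin k → EReal × EReal => (q i).2) (g := fun q => (q j).1)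
    (by fun_prop) (by fun_prop)).union
    (isClosed_le (f := fun q : Fin k → EReal × EReal => (q j).2) (g := fun q => (q i).1)
    (by fun_prop) (by fun_prop))

lemma endpoints (k : ℕ) {G : Fin k → Set ℝ} (hG : IsPartitionR k G) :
    ∃ q ∈ adm k, ∀ i, G i ⊆ eInt (q i).1 (q i).2 := by
  obtain ⟨h1, h2, h3, h4⟩ := hG
  refine ⟨fun i => (sInf ((fun x : ℝ => (x : EReal)) '' G i), sSup ((fun x : ℝ => (x : EReal)) '' G i)),
    ?_, fun i x hx => ⟨sInf_le ⟨x, hx, rfl⟩, le_sSup ⟨x, hx, rfl⟩⟩⟩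
  have key : ∀ i (x : ℝ), sInf ((fun x : ℝ => (x : EReal)) '' G i) < x →
      (x : EReal) < sSup ((fun x : ℝ => (x : EReal)) '' G i) → x ∈ interior (G i) := by
    intro i x hl hr
    obtain ⟨_, ⟨u, hu, rfl⟩, hux⟩ := sInf_lt_iff.1 hl
    obtain ⟨_, ⟨v, hv, rfl⟩, hxv⟩ := lt_sSup_iff.1 hr
    have hux' : u < x := EReal.coe_lt_coe_iff.1 hux
    have hxv' : x < v := EReal.coe_lt_coe_iff.1 hxv
    have hsub : Ioo u v ⊆ G i :=
      Ioo_subset_Icc_self.trans ((h2 i).isPreconnected.ordConnected.out hu hv)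
    exact mem_interior.2 ⟨Ioo u v, hsub, isOpen_Ioo, hux', hxv'⟩
  intro i j hij
  by_contra hcon
  push Not at hcon
  simp only at hcon
  have ni : sInf ((fun x : ℝ => (x : EReal)) '' G i) < sSup ((fun x : ℝ => (x : EReal)) '' G i) := by
    obtain ⟨x, hx⟩ := h3 i
    obtain ⟨e, he, hball⟩ := Metric.isOpen_iff.1 isOpen_interior x hx
    have hy : x + e / 2 ∈ G i := interior_subset (hball (by simp [abs_of_pos he, he]))
    have : (x : EReal) < ((x + e / 2 : ℝ) : EReal) := by
      exact_mod_cast (by linarith : x < x + e / 2)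
    exact (sInf_le (mem_image_of_mem _ (interior_subset hx))).trans_lt
      (this.trans_le (le_sSup (mem_image_of_mem (fun x : ℝ => (x : EReal)) hy)))
  have nj : sInf ((fun x : ℝ => (x : EReal)) '' G j) < sSup ((fun x : ℝ => (x : EReal)) '' G j) := by
    obtain ⟨x, hx⟩ := h3 j
    obtain ⟨e, he, hball⟩ := Metric.isOpen_iff.1 isOpen_interior x hx
    have hy : x + e / 2 ∈ G j := interior_subset (hball (by simp [abs_of_pos he, he]))
    have : (x : EReal) < ((x + e / 2 : ℝ) : EReal) := by
      exact_mod_cast (by linarith : x < x + e / 2)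
    exact (sInf_le (mem_image_of_mem _ (interior_subset hx))).trans_lt
      (this.trans_le (le_sSup (mem_image_of_mem (fun x : ℝ => (x : EReal)) hy)))
  have hmm := max_lt (lt_min ni hcon.2) (lt_min hcon.1 nj)
  obtain ⟨x, hx1, hx2⟩ := EReal.lt_iff_exists_real_btwn.1 hmm
  rw [max_lt_iff] at hx1
  rw [lt_min_iff] at hx2
  have hi := key i x hx1.1 hx2.1
  have hj := key j x hx1.2 hx2.2
  exact (h4 i j hij ⟨interior_subset hi, interior_subset hj⟩).1.2 hi

lemma eInt_closed (a b : EReal) : IsClosed (eInt a b) :=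
  (isClosed_le continuous_const continuous_coe_real_ereal).inter
    (isClosed_le continuous_coe_real_ereal continuous_const)

lemma eInt_ordConnected (a b : EReal) : OrdConnected (eInt a b) := by
  constructor
  intro x hx y hy z hz
  exact ⟨hx.1.trans (EReal.coe_le_coe_iff.2 hz.1), (EReal.coe_le_coe_iff.2 hz.2).trans hy.2⟩

lemma not_interior_left {x : ℝ} {b : EReal} : x ∉ interior (eInt x b) := by
  intro h
  obtain ⟨e, he, hball⟩ := Metric.isOpen_iff.1 isOpen_interior x h
  have := (interior_subset (hball (show x - e / 2 ∈ _ by simp [abs_of_pos he, he]))).1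
  have : x ≤ x - e / 2 := by exact_mod_cast this
  linarith

lemma not_interior_right {x : ℝ} {a : EReal} : x ∉ interior (eInt a x) := by
  intro h
  obtain ⟨e, he, hball⟩ := Metric.isOpen_iff.1 isOpen_interior x h
  have := (interior_subset (hball (show x + e / 2 ∈ _ by simp [abs_of_pos he, he]))).2
  have : x + e / 2 ≤ x := by exact_mod_cast this
  linarith

lemma partition_of_adm {k : ℕ} {q : Fin k → EReal × EReal} (hq : q ∈ adm k)
    (hIntg : ∀ i, (interior (eInt (q i).1 (q i).2)).Nonempty) :
    IsPartitionR k (fun i => eInt (q i).1 (q i).2) := by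
  refine ⟨fun i => eInt_closed _ _, fun i => ⟨(hIntg i).mono interior_subset,
    (eInt_ordConnected _ _).isPreconnected⟩, hIntg, ?_⟩
  have key : ∀ i j, (q i).2 ≤ (q j).1 → ∀ x, x ∈ eInt (q i).1 (q i).2 → x ∈ eInt (q j).1 (q j).2 →
      x ∉ interior (eInt (q i).1 (q i).2) ∧ x ∉ interior (eInt (q j).1 (q j).2) := by
    intro i j h x hi hj
    have e1 : (q i).2 = (x : EReal) := le_antisymm (h.trans hj.1) hi.2
    have e2 : (q j).1 = (x : EReal) := le_antisymm hj.1 (hi.2.trans h)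
    rw [e1, e2]
    exact ⟨not_interior_right, not_interior_left⟩
  rintro i j hij x ⟨hi, hj⟩
  have : x ∉ interior (eInt (q i).1 (q i).2) ∧ x ∉ interior (eInt (q j).1 (q j).2) := by
    rcases hq i j hij with h | h
    · exact key i j h x hi hj
    · exact (key j i h x hj hi).symm
  exact ⟨⟨subset_closure hi, this.1⟩, ⟨subset_closure hj, this.2⟩⟩

lemma exists_min_of_lt {V : ℝ → ℝ} (hloc : LocallyIntegrable V)
    (hpos : ∀ᵐ x ∂(volume : Measure ℝ), 0 ≤ V x) {k : ℕ} (h : optEnergyR V k < SigmaV V) :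
    ∃ G : Fin k → Set ℝ, IsPartitionR k G ∧ energyR V G = optEnergyR V k := by
  obtain ⟨⟨P, hP⟩, hPS⟩ := iInf_lt_iff.1 h
  set Φ : (Fin k → EReal × EReal) → ℝ≥0∞ :=
    fun q => ⨆ i, min (lambdaV V (eInt (q i).1 (q i).2)) (SigmaV V) with hΦ
  have hlsc : LowerSemicontinuous Φ := by
    apply lowerSemicontinuous_iSup
    intro i
    exact (lsc_F hloc hpos).comp (continuous_apply i)
  obtain ⟨q0, hq0, -⟩ := endpoints k hP
  obtain ⟨q, hq, hmin⟩ := (hlsc.lowerSemicontinuousOn (adm k)).exists_isMinOn ⟨q0, hq0⟩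
    (adm_closed k).isCompact
  have hle : ∀ G : Fin k → Set ℝ, IsPartitionR k G → Φ q ≤ energyR V G := by
    intro G hG
    obtain ⟨q1, hq1, hsub⟩ := endpoints k hG
    refine (hmin hq1).trans ?_
    exact iSup_mono fun i => (min_le_left _ _).trans (lambdaV_mono (hsub i))
  have hlt : Φ q < SigmaV V := (hle P hP).trans_lt hPS
  have hi : ∀ i, lambdaV V (eInt (q i).1 (q i).2) ≤ Φ q := by
    intro i
    have h1 : min (lambdaV V (eInt (q i).1 (q i).2)) (SigmaV V) ≤ Φ q :=
      le_iSup (fun i => min (lambdaV V (eInt (q i).1 (q i).2)) (SigmaV V)) i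
    rcases min_le_iff.1 h1 with h | h
    · exact h
    · exact absurd hlt (not_lt.2 h)
  have hpart := partition_of_adm hq
    (fun i => interior_nonempty_of_lt (((hi i).trans_lt hlt).trans_le le_top))
  refine ⟨_, hpart, le_antisymm ?_ (iInf_le (fun G : {G : Fin k → Set ℝ // IsPartitionR k G} => energyR V G.1) ⟨_, hpart⟩)⟩
  refine le_iInf fun G => ?_
  exact (iSup_le hi).trans (hle G.1 G.2)

lemma half_test {V f : ℝ → ℝ} (hloc : LocallyIntegrable V)
    {R : ℝ} (hR : 0 < R) {y : ℝ}
    (hf : TestFor {x | R ≤ |x|} f) (hr : rayleigh V f < y) :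
    ∃ u v M : ℝ, Icc u v ⊆ {x | R ≤ |x| ∧ |x| ≤ M} ∧ lambdaV V (Icc u v) ≤ ENNReal.ofReal y := by
  obtain ⟨f1, f2, f3, f4⟩ := hf
  obtain ⟨M, hM⟩ := f3.isCompact.isBounded.subset_closedBall 0
  have hzR : ∀ x, |x| < R → f x = 0 := by
    intro x hx
    by_contra h
    exact absurd (f4 (subset_tsupport f h)) (not_le.2 hx)
  have hzM : ∀ x, f x ≠ 0 → |x| ≤ M := by
    intro x h
    simpa using hM (subset_tsupport f h)
  -- the two halves
  have main : ∀ T : Set ℝ, (∀ x, R ≤ |x| → ∀ᶠ z in 𝓝 x, (z ∈ T ↔ x ∈ T)) →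
      ContDiff ℝ 1 (T.indicator f) ∧ HasCompactSupport (T.indicator f) ∧
      deriv (T.indicator f) = T.indicator (deriv f) := by
    intro T hT
    have hloc' : ∀ x, (T.indicator f =ᶠ[𝓝 x] f ∧ (x ∈ T ∨ deriv f x = 0)) ∨
        (T.indicator f =ᶠ[𝓝 x] (fun _ => 0) ∧ (x ∉ T ∨ deriv f x = 0)) := by
      intro x
      rcases lt_or_ge |x| R with h | h
      · right
        have hev : ∀ᶠ z in 𝓝 x, |z| < R := continuous_abs.continuousAt.eventually_lt continuousAt_const h
        have hf0 : f =ᶠ[𝓝 x] (fun _ => 0) := hev.mono fun z hz => hzR z hz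
        refine ⟨hev.mono fun z hz => ?_, Or.inr ?_⟩
        · simp [Set.indicator, hzR z hz]
        · rw [hf0.deriv_eq]; simp
      · by_cases hx : x ∈ T
        · left
          refine ⟨(hT x h).mono fun z hz => ?_, Or.inl hx⟩
          simp [Set.indicator, hz.2 hx]
        · right
          refine ⟨(hT x h).mono fun z hz => ?_, Or.inl hx⟩
          have : z ∉ T := fun h' => hx (hz.1 h')
          simp [Set.indicator, this]
    refine ⟨?_, ?_, ?_⟩
    · rw [contDiff_iff_contDiffAt]
      intro x
      rcases hloc' x with h | h
      · exact f1.contDiffAt.congr_of_eventuallyEq h.1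
      · exact contDiffAt_const.congr_of_eventuallyEq h.1
    · apply f3.mono
      intro x hx h
      apply hx; simp [Set.indicator, h]
    · funext x
      rcases hloc' x with ⟨h, h'⟩ | ⟨h, h'⟩
      · rw [h.deriv_eq]
        rcases h' with h' | h'
        · simp [Set.indicator, h']
        · simp [Set.indicator, h']
      · rw [h.deriv_eq]
        rcases h' with h' | h'
        · simp [Set.indicator, h']
        · simp [Set.indicator, h']
  have hTp : ∀ x, R ≤ |x| → ∀ᶠ z in 𝓝 x, (z ∈ Ioi (0:ℝ) ↔ x ∈ Ioi (0:ℝ)) := by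
    intro x hx
    rcases lt_trichotomy x 0 with h | h | h
    · filter_upwards [gt_mem_nhds h] with z hz
      simp only [mem_Ioi]; constructor <;> intro <;> linarith
    · subst h; simp at hx; linarith
    · filter_upwards [lt_mem_nhds h] with z hz
      simp [h, hz]
  have hTn : ∀ x, R ≤ |x| → ∀ᶠ z in 𝓝 x, (z ∈ (Ioi (0:ℝ))ᶜ ↔ x ∈ (Ioi (0:ℝ))ᶜ) := by
    intro x hx
    filter_upwards [hTp x hx] with z hz
    simp only [mem_compl_iff, hz]
  obtain ⟨p1, p2, p3⟩ := main _ hTp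
  obtain ⟨n1, n2, n3⟩ := main _ hTn
  have hmeasT : MeasurableSet (Ioi (0:ℝ)) := measurableSet_Ioi
  have eqE : ∀ T : Set ℝ, MeasurableSet T → deriv (T.indicator f) = T.indicator (deriv f) →
      ∫ x, ((deriv (T.indicator f) x) ^ 2 + V x * (T.indicator f x) ^ 2) =
      ∫ x in T, ((deriv f x) ^ 2 + V x * (f x) ^ 2) := by
    intro T hT h
    rw [h, ← integral_indicator hT]
    congr 1; funext x
    by_cases hx : x ∈ T <;> simp [hx]
  have eqN : ∀ T : Set ℝ, MeasurableSet T →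
      ∫ x, (T.indicator f x) ^ 2 = ∫ x in T, (f x) ^ 2 := by
    intro T hT
    rw [← integral_indicator hT]
    congr 1; funext x
    by_cases hx : x ∈ T <;> simp [hx]
  have iE : Integrable (fun x => (deriv f x) ^ 2 + V x * (f x) ^ 2) :=
    (int_sq (f1.continuous_deriv le_rfl) f3.deriv).add (int_V hloc f1.continuous f3)
  have sE := integral_add_compl hmeasT iE
  have sN := integral_add_compl hmeasT (int_sq f1.continuous f3)
  have hN := pos_sq f1.continuous f3 f2
  rw [rayleigh, div_lt_iff₀ hN, ← sE, ← sN] at hr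
  have fin : ∀ T : Set ℝ, MeasurableSet T → ContDiff ℝ 1 (T.indicator f) →
      HasCompactSupport (T.indicator f) → deriv (T.indicator f) = T.indicator (deriv f) →
      ∫ x in T, ((deriv f x) ^ 2 + V x * (f x) ^ 2) < y * ∫ x in T, (f x) ^ 2 → ∀ u v,
      (∀ x ∈ T, f x ≠ 0 → x ∈ Icc u v) → lambdaV V (Icc u v) ≤ ENNReal.ofReal y := by
    intro T hT t1 t2 t3 hlt u v huv
    rw [← eqE T hT t3, ← eqN T hT] at hlt
    have hne : T.indicator f ≠ 0 := by
      intro h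
      have h' : ∀ x, T.indicator f x = 0 := fun x => by rw [h]; rfl
      have h'' : deriv (T.indicator f) = 0 := by rw [h]; simp
      rw [h''] at hlt
      simp [h'] at hlt
    have hNT := pos_sq t1.continuous t2 hne
    have htest : TestFor (Icc u v) (T.indicator f) := by
      refine ⟨t1, hne, t2, closure_minimal ?_ isClosed_Icc⟩
      intro x hx
      have hx' : x ∈ T := by
        by_contra h; exact hx (by simp [Set.indicator, h])
      apply huv x hx'
      intro h; exact hx (by simp [Set.indicator, h])
    refine (lambdaV_le htest).trans (ENNReal.ofReal_le_ofReal ?_)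
    rw [rayleigh, div_le_iff₀ hNT]
    exact hlt.le
  have hbd : ∀ x, f x ≠ 0 → R ≤ |x| ∧ |x| ≤ M := fun x hx =>
    ⟨not_lt.1 fun h => hx (hzR x h), hzM x hx⟩
  rcases lt_or_ge (∫ x in Ioi (0:ℝ), ((deriv f x) ^ 2 + V x * (f x) ^ 2))
    (y * ∫ x in Ioi (0:ℝ), (f x) ^ 2) with h | h
  · refine ⟨R, M, M, ?_, fin _ hmeasT p1 p2 p3 h _ _ ?_⟩
    · intro x hx
      simp only [mem_ofPred_eq]
      rw [abs_of_nonneg (by linarith [hx.1])]; exact hx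
    · intro x hx h0
      have := hbd x h0
      rwa [abs_of_pos hx] at this
  · refine ⟨-M, -R, M, ?_, fin _ hmeasT.compl n1 n2 n3 (by linarith) _ _ ?_⟩
    · intro x hx
      simp only [mem_ofPred_eq]
      rw [abs_of_nonpos (by linarith [hx.2])]
      exact ⟨by linarith [hx.2], by linarith [hx.1]⟩
    · intro x hx h0
      have := hbd x h0
      simp only [mem_compl_iff, mem_Ioi, not_lt] at hx
      rw [abs_of_nonpos hx] at this
      exact ⟨by linarith, by linarith⟩

lemma opt_le_sigma {V : ℝ → ℝ} (hloc : LocallyIntegrable V)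
    (hpos : ∀ᵐ x ∂(volume : Measure ℝ), 0 ≤ V x) (k : ℕ) : optEnergyR V k ≤ SigmaV V := by
  apply le_of_forall_gt_imp_ge_of_dense
  intro y0 hy0
  obtain ⟨y, hy, hyy⟩ := ENNReal.lt_iff_exists_nnreal_btwn.1 hy0
  have hstep : ∀ R : ℝ, ∃ w : ℝ × ℝ × ℝ, 0 < R → (Icc w.1 w.2.1 ⊆ {x | R ≤ |x| ∧ |x| ≤ w.2.2} ∧
      lambdaV V (Icc w.1 w.2.1) ≤ y) := by
    intro R
    by_cases hR : 0 < R
    · have h1 : lambdaV V {x : ℝ | R ≤ |x|} < y :=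
        (le_iSup₂ (f := fun (R : ℝ) (_ : 0 < R) => lambdaV V {x : ℝ | R ≤ |x|}) R hR).trans_lt hy
      obtain ⟨f, hf, hfr⟩ := exists_test_of_lt h1
      have hr : rayleigh V f < y := by
        by_contra h
        push Not at h
        have := ENNReal.ofReal_le_ofReal h
        rw [ENNReal.ofReal_coe_nnreal] at this
        exact absurd hfr (not_lt.2 this)
      obtain ⟨u, v, M, h1, h2⟩ := half_test hloc hR hf hr
      rw [ENNReal.ofReal_coe_nnreal] at h2
      exact ⟨(u, v, M), fun _ => ⟨h1, h2⟩⟩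
    · exact ⟨0, fun h => absurd h hR⟩
  choose w hw using hstep
  let R : ℕ → ℝ := fun n => Nat.rec 1 (fun _ r => max r (w r).2.2 + 1) n
  have hRs : ∀ n, R (n + 1) = max (R n) (w (R n)).2.2 + 1 := fun n => rfl
  have hmono : StrictMono R := strictMono_nat_of_lt_succ fun n => by
    rw [hRs]; linarith [le_max_left (R n) (w (R n)).2.2]
  have hRpos : ∀ n, 0 < R n := fun n =>
    lt_of_lt_of_le (show (0:ℝ) < R 0 from one_pos) (hmono.monotone (Nat.zero_le n))
  have hdis : ∀ i j : ℕ, i < j → ∀ x, x ∈ Icc (w (R i)).1 (w (R i)).2.1 →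
      x ∉ Icc (w (R j)).1 (w (R j)).2.1 := by
    intro i j hij x hi hj
    have a := ((hw _ (hRpos i)).1 hi).2
    have b := ((hw _ (hRpos j)).1 hj).1
    have c := hmono.monotone (Nat.succ_le_of_lt hij)
    rw [Nat.succ_eq_add_one, hRs] at c
    linarith [le_max_right (R i) (w (R i)).2.2]
  have hpart : IsPartitionR k (fun i : Fin k => Icc (w (R i)).1 (w (R i)).2.1) := by
    have hIntg : ∀ n : ℕ, (interior (Icc (w (R n)).1 (w (R n)).2.1)).Nonempty := fun n =>
      interior_nonempty_of_lt ((hw _ (hRpos n)).2.trans_lt ENNReal.coe_lt_top)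
    refine ⟨fun i => isClosed_Icc, fun i => ⟨(hIntg i).mono interior_subset, isPreconnected_Icc⟩,
      fun i => hIntg i, ?_⟩
    rintro i j hij x ⟨hi, hj⟩
    exfalso
    rcases lt_or_gt_of_ne (fun h => hij (Fin.ext h) : (i : ℕ) ≠ j) with h | h
    · exact hdis _ _ h x hi hj
    · exact hdis _ _ h x hj hi
  refine (iInf_le (fun G : {G : Fin k → Set ℝ // IsPartitionR k G} => energyR V G.1) ⟨_, hpart⟩).trans ?_
  exact iSup_le fun i => (hw _ (hRpos i)).2.trans hyy.le

/-- **Corollary 1.4 for `G = ℝ`.** A spectral minimal `k`-partition of `ℝ` exists if and only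
if there is some `k`-partition whose energy is at most `Σ_V`. -/
theorem exists_minimal_partition_iff (V : ℝ → ℝ) (hmeas : Measurable V)
    (hloc : LocallyIntegrable V) (hpos : ∀ᵐ x ∂(volume : Measure ℝ), 0 ≤ V x)
    (k : ℕ) (hk : 1 ≤ k) :
    (∃ G : Fin k → Set ℝ, IsPartitionR k G ∧ energyR V G = optEnergyR V k) ↔
      (∃ G : Fin k → Set ℝ, IsPartitionR k G ∧ energyR V G ≤ SigmaV V) := by
  constructor
  · rintro ⟨G, hG, hE⟩
    exact ⟨G, hG, hE.trans_le (opt_le_sigma hloc hpos k)⟩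
  · rintro ⟨Q, hQ, hE⟩
    rcases lt_or_ge (optEnergyR V k) (SigmaV V) with h | h
    · exact exists_min_of_lt hloc hpos h
    · exact ⟨Q, hQ, le_antisymm (hE.trans h)
        (iInf_le (fun G : {G : Fin k → Set ℝ // IsPartitionR k G} => energyR V G.1) ⟨Q, hQ⟩)⟩
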